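/- Let ν be a radial weight and let ω be a radial weight in D̂ such that P_ω : L^∞_ν̂ → H^∞_ν̂ is bounded. Then ν ∈ Ď. -/

import Mathlib

open MeasureTheory Set Complex
open scoped ENNReal

noncomputable section

/-- The open unit disc in the complex plane. -/
def unitDisc : Set ℂ := Metric.ball 0 1

/-- Tail integral `ω̂(r) = ∫_r^1 ω(s) ds`. -/
def tl (ω : ℝ → ℝ) (r : ℝ) : ℝ := ∫ s in r..1, ω s

/-- Moment `ω_x = ∫_0^1 s^x ω(s) ds` (real power in the exponent). -/
def mom (ω : ℝ → ℝ) (x : ℝ) : ℝ := ∫ s in (0:ℝ)..1, s ^ x * ω s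

/-- `ω` is a radial weight: nonnegative and integrable on `[0,1)`, with positive
tail integrals. -/
def IsRadialWeight (ω : ℝ → ℝ) : Prop :=
  (∀ s ∈ Ico (0:ℝ) 1, 0 ≤ ω s) ∧ IntegrableOn ω (Ico (0:ℝ) 1) ∧
    ∀ r ∈ Ico (0:ℝ) 1, 0 < tl ω r

/-- The upper doubling class `D̂`: `sup_{0≤r<1} ω̂(r)/ω̂((1+r)/2) < ∞`. -/
def Dhat (ω : ℝ → ℝ) : Prop :=
  ∃ C : ℝ, ∀ r ∈ Ico (0:ℝ) 1, tl ω r ≤ C * tl ω ((1 + r) / 2)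

/-- The class `Ď`: there are `K > 1`, `C > 1` with `ω̂(r) ≥ C ω̂(1 - (1-r)/K)`. -/
def Dcheck (ω : ℝ → ℝ) : Prop :=
  ∃ K C : ℝ, 1 < K ∧ 1 < C ∧ ∀ r ∈ Ico (0:ℝ) 1, C * tl ω (1 - (1 - r) / K) ≤ tl ω r

/-- The class `D = D̂ ∩ Ď`. -/
def DD (ω : ℝ → ℝ) : Prop := Dhat ω ∧ Dcheck ω

/-- The Bergman reproducing kernel `B^ω_z(ζ) = Σ_n (conj z · ζ)^n / (2 ω_{2n+1})`. -/
def bKer (ω : ℝ → ℝ) (z ζ : ℂ) : ℂ :=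
  ∑' n : ℕ, (starRingEnd ℂ z * ζ) ^ n / ((2 * mom ω (2 * (n : ℝ) + 1) : ℝ) : ℂ)

/-- The integrand of the Bergman projection. -/
def bInt (ω : ℝ → ℝ) (f : ℂ → ℂ) (z ζ : ℂ) : ℂ :=
  f ζ * starRingEnd ℂ (bKer ω z ζ) * ((ω ‖ζ‖ : ℝ) : ℂ)

/-- The Bergman projection `P_ω f(z) = ∫_𝔻 f(ζ) conj(B^ω_z(ζ)) ω(ζ) dA(ζ)`,
where `dA` is normalized area measure `dx dy / π`. -/
def bProj (ω : ℝ → ℝ) (f : ℂ → ℂ) (z : ℂ) : ℂ :=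
  (Real.pi : ℂ)⁻¹ * ∫ ζ in unitDisc, bInt ω f z ζ

/-- The weighted sup-norm `ess sup_{z ∈ 𝔻} |f(z)| v(|z|)`, valued in `ℝ≥0∞`. -/
def wSup (v : ℝ → ℝ) (f : ℂ → ℂ) : ℝ≥0∞ :=
  essSup (fun z => ENNReal.ofReal (‖f z‖ * v ‖z‖)) (volume.restrict unitDisc)

/-- `P_ω : L^∞_v → H^∞_v` is bounded: there is `C > 0` so that for every
`f ∈ L^∞_v` the defining integral converges absolutely at every point of `𝔻`,
`P_ω f` is analytic on `𝔻`, and `‖P_ω f‖_{L^∞_v} ≤ C ‖f‖_{L^∞_v}`. -/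
def ProjBddH (ω v : ℝ → ℝ) : Prop :=
  ∃ C : ℝ, 0 < C ∧ ∀ f : ℂ → ℂ,
    AEStronglyMeasurable f (volume.restrict unitDisc) → wSup v f < ⊤ →
    (∀ z ∈ unitDisc, IntegrableOn (bInt ω f z) unitDisc) ∧
    DifferentiableOn ℂ (bProj ω f) unitDisc ∧
    wSup v (bProj ω f) ≤ ENNReal.ofReal C * wSup v f

/-- `P_ω : L^∞_v → B^∞_v` is bounded: there is `C > 0` so that for every
`f ∈ L^∞_v` the defining integral converges absolutely at every point of `𝔻`,
`P_ω f` is analytic on `𝔻`, and `‖P_ω f‖_{B^∞_v} ≤ C ‖f‖_{L^∞_v}`. -/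
def ProjBddB (ω v : ℝ → ℝ) : Prop :=
  ∃ C : ℝ, 0 < C ∧ ∀ f : ℂ → ℂ,
    AEStronglyMeasurable f (volume.restrict unitDisc) → wSup v f < ⊤ →
    (∀ z ∈ unitDisc, IntegrableOn (bInt ω f z) unitDisc) ∧
    DifferentiableOn ℂ (bProj ω f) unitDisc ∧
    ∀ z ∈ unitDisc,
      ENNReal.ofReal ((1 - ‖z‖) * v ‖z‖ * ‖deriv (bProj ω f) z‖) ≤
        ENNReal.ofReal C * wSup v f

/-- The moment condition `sup_{x ≥ 0} (ν_x / ω_{2x}) (ω/ν̂)_x < ∞`. -/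
def MomCond (ω ν : ℝ → ℝ) : Prop :=
  ∃ C : ℝ, ∀ x : ℝ, 0 ≤ x →
    mom ν x / mom ω (2 * x) * mom (fun s => ω s / tl ν s) x ≤ C

/-- The tail condition `sup_{0 ≤ r < 1} (ν̂(r)/ω̂(r)) ∫_r^1 ω(s)/ν̂(s) ds < ∞`. -/
def TailCond (ω ν : ℝ → ℝ) : Prop :=
  ∃ C : ℝ, ∀ r ∈ Ico (0:ℝ) 1, tl ν r / tl ω r * tl (fun s => ω s / tl ν s) r ≤ C

/-!
Test `P_ω` on `f = -i arg ζ` restricted to the annulus `ρ < |ζ| < 1`, for which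
`‖f‖_{L^∞_ν̂} ≤ π ν̂(ρ)`. Its projection at the point `-r` is the positive series
`∑ r ^ n (∫_ρ^1 s ^ (n + 1) ω(s) ds) / (n ω_{2n+1})`. For `ρ = 1 - 1 / (N + 1)` and
`r = 1 - 1 / (M + 1)`, membership of `ω` in `D̂` bounds the `n`-th term with `N ≤ n < M` below by a
multiple of `1 / n`, since moments of order `n` are comparable with the tail at `1 - 1 / (n + 1)`.
Boundedness thus gives `log (M / N) ν̂(r) ≲ ν̂(ρ)`, and a large fixed ratio `M / N` makes
`ν̂(r) ≤ ν̂(ρ) / 2`, which is `ν ∈ Ď`.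
-/

open scoped Real ComplexConjugate

/-- The moment `∫_a^1 s^n ω(s) ds` over `[a, 1)`, with a natural exponent. The case `a = 0` is
`mom ω n` and the case `n = 0` is `tl ω a`, so that both are handled at once. -/
def tailMom (ω : ℝ → ℝ) (a : ℝ) (n : ℕ) : ℝ := ∫ s in a..1, s ^ n * ω s

lemma tailMom_exponent_zero (ω : ℝ → ℝ) (a : ℝ) : tailMom ω a 0 = tl ω a := by
  simp [tailMom, tl]

lemma mom_natCast (ω : ℝ → ℝ) (n : ℕ) : mom ω n = tailMom ω 0 n := by
  simp [mom, tailMom]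

namespace IsRadialWeight

variable {ω : ℝ → ℝ} {a b t : ℝ}

lemma tl_pos (h : IsRadialWeight ω) (ha : 0 ≤ a) (ha' : a < 1) : 0 < tl ω a :=
  h.2.2 a ⟨ha, ha'⟩

lemma intervalIntegrable_mul (h : IsRadialWeight ω) {f : ℝ → ℝ} (hf : Continuous f)
    (ha : 0 ≤ a) (hab : a ≤ b) (hb : b ≤ 1) :
    IntervalIntegrable (fun s => f s * ω s) volume a b :=
  ((intervalIntegrable_iff_integrableOn_Ico_of_le hab).2
    (h.2.1.mono_set (Ico_subset_Ico ha hb))).continuousOn_mul hf.continuousOn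

lemma integral_mul_le_integral_mul (h : IsRadialWeight ω) {f g : ℝ → ℝ} (hf : Continuous f)
    (hg : Continuous g) (ha : 0 ≤ a) (hab : a ≤ b) (hb : b ≤ 1)
    (hfg : ∀ s ∈ Ioo a b, f s ≤ g s) :
    ∫ s in a..b, f s * ω s ≤ ∫ s in a..b, g s * ω s :=
  intervalIntegral.integral_mono_on_of_le_Ioo hab (h.intervalIntegrable_mul hf ha hab hb)
    (h.intervalIntegrable_mul hg ha hab hb) fun s hs =>
      mul_le_mul_of_nonneg_right (hfg s hs) (h.1 s ⟨ha.trans hs.1.le, hs.2.trans_le hb⟩)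

lemma integral_add_tailMom (h : IsRadialWeight ω) (n : ℕ) (ha : 0 ≤ a) (hab : a ≤ b)
    (hb : b ≤ 1) : (∫ s in a..b, s ^ n * ω s) + tailMom ω b n = tailMom ω a n :=
  intervalIntegral.integral_add_adjacent_intervals
    (h.intervalIntegrable_mul (continuous_pow n) ha hab hb)
    (h.intervalIntegrable_mul (continuous_pow n) (ha.trans hab) hb le_rfl)

lemma tailMom_anti_left (h : IsRadialWeight ω) (n : ℕ) (ha : 0 ≤ a) (hab : a ≤ b)
    (hb : b ≤ 1) : tailMom ω b n ≤ tailMom ω a n := by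
  have nonneg : 0 ≤ ∫ s in a..b, s ^ n * ω s := by
    simpa using h.integral_mul_le_integral_mul continuous_zero (continuous_pow n) ha hab hb
      fun s hs => pow_nonneg (ha.trans hs.1.le) n
  linarith [h.integral_add_tailMom n ha hab hb]

lemma tl_anti (h : IsRadialWeight ω) (ha : 0 ≤ a) (hab : a ≤ b) (hb : b ≤ 1) :
    tl ω b ≤ tl ω a := by
  simpa only [tailMom_exponent_zero] using h.tailMom_anti_left 0 ha hab hb

lemma tailMom_anti_right (h : IsRadialWeight ω) {m n : ℕ} (hmn : m ≤ n) (ha : 0 ≤ a)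
    (ha' : a ≤ 1) : tailMom ω a n ≤ tailMom ω a m :=
  h.integral_mul_le_integral_mul (continuous_pow n) (continuous_pow m) ha ha' le_rfl
    fun _ hs => pow_le_pow_of_le_one (ha.trans hs.1.le) hs.2.le hmn

lemma tailMom_le_tl (h : IsRadialWeight ω) (n : ℕ) (ha : 0 ≤ a) (ha' : a ≤ 1) :
    tailMom ω a n ≤ tl ω a :=
  (h.tailMom_anti_right n.zero_le ha ha').trans_eq (tailMom_exponent_zero ω a)

lemma pow_mul_tl_le_tailMom (h : IsRadialWeight ω) (n : ℕ) (ha : 0 ≤ a) (hat : a ≤ t)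
    (ht : t ≤ 1) : t ^ n * tl ω t ≤ tailMom ω a n :=
  calc t ^ n * tl ω t = ∫ s in t..1, t ^ n * ω s := (intervalIntegral.integral_const_mul _ _).symm
    _ ≤ tailMom ω t n :=
      h.integral_mul_le_integral_mul continuous_const (continuous_pow n) (ha.trans hat) ht le_rfl
        fun _ hs => pow_le_pow_left₀ (ha.trans hat) hs.1.le n
    _ ≤ tailMom ω a n := h.tailMom_anti_left n ha hat ht

lemma tailMom_nonneg (h : IsRadialWeight ω) (n : ℕ) (ha : 0 ≤ a) (ha' : a < 1) :
    0 ≤ tailMom ω a n :=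
  (mul_nonneg (pow_nonneg ha n) (h.tl_pos ha ha').le).trans
    (h.pow_mul_tl_le_tailMom n ha le_rfl ha'.le)

lemma tailMom_zero_pos (h : IsRadialWeight ω) (n : ℕ) : 0 < tailMom ω 0 n := by
  have tl_half_pos : 0 < tl ω (1 / 2) := h.tl_pos (by norm_num) (by norm_num)
  calc 0 < (1 / 2) ^ n * tl ω (1 / 2) := by positivity
    _ ≤ tailMom ω 0 n := h.pow_mul_tl_le_tailMom n le_rfl (by norm_num) (by norm_num)

lemma tailMom_add_le (h : IsRadialWeight ω) (m k : ℕ) (ha : 0 ≤ a) (hat : a ≤ t) (ht : t < 1) :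
    tailMom ω a (m + k) ≤ t ^ k * tailMom ω a m + tl ω t := by
  have ht0 : 0 ≤ t := ha.trans hat
  have left_le : ∫ s in a..t, s ^ (m + k) * ω s ≤ t ^ k * ∫ s in a..t, s ^ m * ω s := by
    simp_rw [← intervalIntegral.integral_const_mul, ← mul_assoc]
    refine h.integral_mul_le_integral_mul (continuous_pow _) (by fun_prop) ha hat ht.le
      fun s hs => ?_
    have hs0 : 0 ≤ s := ha.trans hs.1.le
    rw [pow_add, mul_comm]
    gcongr
    exact hs.2.le
  have left_le_tailMom : ∫ s in a..t, s ^ m * ω s ≤ tailMom ω a m := by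
    linarith [h.integral_add_tailMom m ha hat ht.le, h.tailMom_nonneg m ht0 ht]
  calc tailMom ω a (m + k)
      = (∫ s in a..t, s ^ (m + k) * ω s) + tailMom ω t (m + k) :=
        (h.integral_add_tailMom (m + k) ha hat ht.le).symm
    _ ≤ t ^ k * (∫ s in a..t, s ^ m * ω s) + tl ω t := by
        gcongr
        exact h.tailMom_le_tl (m + k) ht0 ht.le
    _ ≤ t ^ k * tailMom ω a m + tl ω t := by gcongr

lemma continuousOn_tl (h : IsRadialWeight ω) : ContinuousOn (tl ω) (Icc 0 1) := by
  have integrableOn : IntegrableOn ω (uIcc 0 1) := by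
    rw [uIcc_of_le zero_le_one, integrableOn_Icc_iff_integrableOn_Ico]
    exact h.2.1
  simpa only [uIcc_of_le zero_le_one] using!
    intervalIntegral.continuousOn_primitive_interval_left integrableOn

lemma summable_pow_div_tailMom (h : IsRadialWeight ω) {r : ℝ} (hr : 0 ≤ r) (hr' : r < 1) :
    Summable fun n : ℕ => r ^ n / (2 * tailMom ω 0 (2 * n + 1)) := by
  obtain ⟨t, hrt, ht⟩ : ∃ t, √r < t ∧ t < 1 :=
    exists_between ((Real.sqrt_lt' one_pos).2 (by rwa [one_pow]))
  have ht0 : 0 < t := (Real.sqrt_nonneg r).trans_lt hrt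
  have ratio_lt : r / t ^ 2 < 1 := by
    rw [div_lt_one (by positivity)]
    exact (Real.sqrt_lt' ht0).1 hrt
  have htl : 0 < tl ω t := h.tl_pos ht0.le ht
  refine Summable.of_nonneg_of_le
    (fun n => div_nonneg (pow_nonneg hr n) (by linarith [h.tailMom_zero_pos (2 * n + 1)]))
    (fun n => ?_)
    ((summable_geometric_of_lt_one (by positivity) ratio_lt).mul_left (1 / (2 * (t * tl ω t))))
  calc r ^ n / (2 * tailMom ω 0 (2 * n + 1)) ≤ r ^ n / (2 * (t ^ (2 * n + 1) * tl ω t)) := by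
        gcongr
        exact h.pow_mul_tl_le_tailMom (2 * n + 1) le_rfl ht0.le ht.le
    _ = 1 / (2 * (t * tl ω t)) * (r / t ^ 2) ^ n := by
        rw [div_pow, pow_succ, pow_mul]
        field_simp

end IsRadialWeight

/-- The radii `n / (n + 1) = 1 - 1 / (n + 1)`, at which the tail of a weight in `D̂` is comparable
with its `n`-th moment. The shift by one makes `n = 0` admissible. -/
def momRadius (n : ℕ) : ℝ := n / (n + 1)

lemma one_sub_momRadius (n : ℕ) : 1 - momRadius n = 1 / (n + 1) := by
  unfold momRadius
  field_simp
  ring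

lemma momRadius_nonneg (n : ℕ) : 0 ≤ momRadius n := by
  unfold momRadius
  positivity

lemma momRadius_lt_one (n : ℕ) : momRadius n < 1 := by
  have : 0 < 1 - momRadius n := one_sub_momRadius n ▸ Nat.one_div_pos_of_nat
  linarith

lemma momRadius_mem_Ico (n : ℕ) : momRadius n ∈ Ico (0 : ℝ) 1 :=
  ⟨momRadius_nonneg n, momRadius_lt_one n⟩

lemma IsRadialWeight.tl_momRadius_pos {ω : ℝ → ℝ} (h : IsRadialWeight ω) (n : ℕ) :
    0 < tl ω (momRadius n) :=
  h.2.2 _ (momRadius_mem_Ico n)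

lemma monotone_momRadius : Monotone momRadius := by
  intro m n hmn
  have : 1 - momRadius n ≤ 1 - momRadius m := by
    rw [one_sub_momRadius, one_sub_momRadius]
    exact Nat.one_div_le_one_div hmn
  linarith

lemma one_sub_momRadius_half_le (n : ℕ) :
    1 - momRadius (n / 2) ≤ 2 * (1 - momRadius n) := by
  have : (n + 1 : ℝ) ≤ 2 * ((n / 2 : ℕ) + 1) := by norm_cast; omega
  rw [one_sub_momRadius, one_sub_momRadius, mul_one_div,
    div_le_div_iff₀ (by positivity) (by positivity)]
  linarith

lemma exp_neg_two_le_momRadius_pow {n : ℕ} (hn : 1 ≤ n) :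
    Real.exp (-2) ≤ momRadius n ^ (n + 1) := by
  have hn' : (1 : ℝ) ≤ n := by exact_mod_cast hn
  have pos : 0 < momRadius n := by unfold momRadius; positivity
  have le_log : -(1 / n : ℝ) ≤ Real.log (momRadius n) := by
    refine le_trans (le_of_eq ?_) (Real.one_sub_inv_le_log_of_pos pos)
    unfold momRadius
    field_simp
    ring
  calc Real.exp (-2) ≤ Real.exp ((n + 1 : ℕ) * -(1 / n : ℝ)) := by
        have : (1 : ℝ) / n ≤ 1 := by rw [div_le_one (by positivity)]; exact hn'
        rw [Real.exp_le_exp]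
        push_cast
        rw [mul_neg, add_mul, mul_one_div_cancel (by positivity)]
        linarith
    _ = Real.exp (-(1 / n : ℝ)) ^ (n + 1) := Real.exp_nat_mul _ _
    _ ≤ momRadius n ^ (n + 1) := by
        gcongr
        exact (Real.le_log_iff_exp_le pos).1 le_log

lemma max_zero_one_sub_pow_le {k : ℕ} {v : ℝ} (hkv : 0 < k * v) :
    max 0 (1 - v) ^ k ≤ 1 / (k * v) :=
  calc max 0 (1 - v) ^ k ≤ Real.exp (-v) ^ k := by
        gcongr
        exact max_le (Real.exp_pos _).le (Real.one_sub_le_exp_neg v)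
    _ = 1 / Real.exp (k * v) := by
        rw [← Real.exp_nat_mul, mul_neg, Real.exp_neg, one_div]
    _ ≤ 1 / (k * v) := by
        gcongr
        linarith [Real.add_one_le_exp (k * v)]

lemma max_zero_one_sub_div_pow_le {n : ℕ} (hn : 1 ≤ n) {y : ℝ} (hy : 0 < y) :
    max 0 (1 - y / (n + 1)) ^ (n - n / 2) ≤ 4 / y := by
  have quarter_le : (n + 1 : ℝ) / 4 ≤ (n - n / 2 : ℕ) := by
    have : (n + 1 : ℝ) ≤ 4 * (n - n / 2 : ℕ) := by norm_cast; omega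
    linarith
  have exponent_ge : y / 4 ≤ (n - n / 2 : ℕ) * (y / (n + 1)) :=
    calc y / 4 = (n + 1) / 4 * (y / (n + 1)) := by field_simp
      _ ≤ (n - n / 2 : ℕ) * (y / (n + 1)) := by gcongr
  calc max 0 (1 - y / (n + 1)) ^ (n - n / 2) ≤ 1 / ((n - n / 2 : ℕ) * (y / (n + 1))) :=
        max_zero_one_sub_pow_le (lt_of_lt_of_le (by positivity) exponent_ge)
    _ ≤ 1 / (y / 4) := by gcongr
    _ = 4 / y := one_div_div y 4

namespace Dhat

variable {ω : ℝ → ℝ}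

lemma exists_tl_le_pow_mul_tl (hD : Dhat ω) (hω : IsRadialWeight ω) :
    ∃ C : ℝ, 1 ≤ C ∧ ∀ (p : ℕ) {r s : ℝ}, r ∈ Ico (0 : ℝ) 1 → s ∈ Ico (0 : ℝ) 1 →
      1 - r ≤ 2 ^ p * (1 - s) → tl ω r ≤ C ^ p * tl ω s := by
  obtain ⟨C, hC⟩ := hD
  have half_mem {r : ℝ} (hr : r ∈ Ico (0 : ℝ) 1) : (1 + r) / 2 ∈ Ico (0 : ℝ) 1 :=
    ⟨by linarith [hr.1], by linarith [hr.2]⟩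
  have tl_le {r : ℝ} (hr : r ∈ Ico (0 : ℝ) 1) : tl ω r ≤ max C 1 * tl ω ((1 + r) / 2) :=
    (hC r hr).trans (mul_le_mul_of_nonneg_right (le_max_left C 1)
      (hω.2.2 _ (half_mem hr)).le)
  refine ⟨max C 1, le_max_right C 1, fun p => ?_⟩
  induction p with
  | zero =>
    intro r s hr hs hrs
    rw [pow_zero, one_mul] at hrs ⊢
    exact hω.tl_anti hs.1 (by linarith) hr.2.le
  | succ p ih =>
    intro r s hr hs hrs
    have hrs' : 1 - (1 + r) / 2 ≤ 2 ^ p * (1 - s) := by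
      rw [pow_succ] at hrs
      linarith
    calc tl ω r ≤ max C 1 * tl ω ((1 + r) / 2) := tl_le hr
      _ ≤ max C 1 * (max C 1 ^ p * tl ω s) := by
          gcongr
          exact ih (half_mem hr) hs hrs'
      _ = max C 1 ^ (p + 1) * tl ω s := by ring

/-- The `n`-th moment is compared with the `n / 2`-th one, and the mass beyond
`t = 1 - 2 ^ p / (n + 1)` with the tail. For `p` large the factor `t ^ (n - n / 2)` absorbs the
doubling constant, which closes a strong induction with a fixed constant. -/
lemma exists_tailMom_le_mul_tl (hD : Dhat ω) (hω : IsRadialWeight ω) :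
    ∃ S : ℝ, 0 < S ∧ ∀ n : ℕ, tailMom ω 0 n ≤ S * tl ω (momRadius n) := by
  obtain ⟨C, hC, hdoubling⟩ := hD.exists_tl_le_pow_mul_tl hω
  obtain ⟨p, hp⟩ := pow_unbounded_of_one_lt (8 * C) one_lt_two
  refine ⟨2 * C ^ p, by positivity, fun n => ?_⟩
  induction n using Nat.strong_induction_on with | _ n ih
  rcases Nat.eq_zero_or_pos n with rfl | hn
  · have one_le : 1 ≤ 2 * C ^ p := by linarith [one_le_pow₀ hC (n := p)]
    calc tailMom ω 0 0 = tl ω (momRadius 0) := by simp [tailMom_exponent_zero, momRadius]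
      _ ≤ 2 * C ^ p * tl ω (momRadius 0) :=
          le_mul_of_one_le_left (hω.tl_momRadius_pos 0).le one_le
  set t : ℝ := max 0 (1 - 2 ^ p / (n + 1))
  have ht0 : 0 ≤ t := le_max_left _ _
  have ht1 : t < 1 := max_lt one_pos (sub_lt_self 1 (by positivity))
  have tl_t_le : tl ω t ≤ C ^ p * tl ω (momRadius n) := by
    refine hdoubling p ⟨ht0, ht1⟩ (momRadius_mem_Ico n) ?_
    rw [one_sub_momRadius, mul_one_div]
    linarith [le_max_right 0 (1 - 2 ^ p / (n + 1 : ℝ))]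
  have half_le : tl ω (momRadius (n / 2)) ≤ C * tl ω (momRadius n) := by
    simpa only [pow_one] using
      hdoubling 1 (momRadius_mem_Ico _) (momRadius_mem_Ico n)
        (by simpa only [pow_one] using one_sub_momRadius_half_le n)
  have pow_le : t ^ (n - n / 2) ≤ 1 / (2 * C) := by
    refine (max_zero_one_sub_div_pow_le hn (by positivity)).trans ?_
    rw [div_le_div_iff₀ (by positivity) (by positivity)]
    linarith
  calc tailMom ω 0 n = tailMom ω 0 (n / 2 + (n - n / 2)) := by
        rw [Nat.add_sub_cancel' (Nat.div_le_self n 2)]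
    _ ≤ t ^ (n - n / 2) * tailMom ω 0 (n / 2) + tl ω t :=
        hω.tailMom_add_le _ _ le_rfl ht0 ht1
    _ ≤ 1 / (2 * C) * (2 * C ^ p * (C * tl ω (momRadius n))) + C ^ p * tl ω (momRadius n) := by
        gcongr
        · exact hω.tailMom_nonneg _ le_rfl one_pos
        · exact (ih _ (Nat.div_lt_self hn one_lt_two)).trans (by gcongr)
    _ = 2 * C ^ p * tl ω (momRadius n) := by field_simp; ring

end Dhat

lemma mem_unitDisc {z : ℂ} : z ∈ unitDisc ↔ ‖z‖ < 1 := mem_ball_zero_iff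

lemma isOpen_unitDisc : IsOpen unitDisc := Metric.isOpen_ball

lemma integral_norm_mul_arg (g h : ℝ → ℂ) :
    ∫ ζ : ℂ, g ‖ζ‖ * h (arg ζ) = (∫ s in Ioi (0 : ℝ), s * g s) * ∫ θ in Ioo (-π) π, h θ := by
  rw [← Complex.integral_comp_polarCoord_symm, ← setIntegral_prod_mul]
  refine setIntegral_congr_fun polarCoord.open_target.measurableSet fun p hp => ?_
  have polar : (‖Complex.polarCoord.symm p‖, arg (Complex.polarCoord.symm p)) = p := by
    rw [← Complex.polarCoord_apply]
    exact Complex.polarCoord.right_inv hp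
  obtain ⟨norm_eq, arg_eq⟩ := Prod.ext_iff.1 polar
  simp only at norm_eq arg_eq
  simp only [norm_eq, arg_eq, real_smul, mul_assoc]

lemma integral_ofReal_mul_cexp {c : ℂ} (hc : c ≠ 0) (a b : ℝ) :
    ∫ θ in a..b, (θ : ℂ) * cexp (c * θ) =
      (b / c - 1 / c ^ 2) * cexp (c * b) - (a / c - 1 / c ^ 2) * cexp (c * a) := by
  refine intervalIntegral.integral_eq_sub_of_hasDerivAt
    (f := fun θ : ℝ => ((θ : ℂ) / c - 1 / c ^ 2) * cexp (c * θ)) (fun θ _ => ?_)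
    (Continuous.intervalIntegrable (by fun_prop) _ _)
  have deriv_id : HasDerivAt (fun θ : ℝ => (θ : ℂ)) 1 θ := (hasDerivAt_id θ).ofReal_comp
  refine (((deriv_id.div_const c).sub_const _).mul (deriv_id.const_mul c).cexp).congr_deriv ?_
  field_simp
  ring

/-- For `n = 0` the right-hand side is `0` because of division by zero, as is the integral. -/
lemma integral_ofReal_mul_cexp_neg_nat (n : ℕ) :
    ∫ θ in Ioo (-π) π, (θ : ℂ) * cexp (-(n * I) * θ) = 2 * π * I * (-1) ^ n / n := by
  rw [← integral_Ioc_eq_integral_Ioo,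
    ← intervalIntegral.integral_of_le (by linarith [Real.pi_pos])]
  rcases Nat.eq_zero_or_pos n with rfl | hn
  · simp only [Nat.cast_zero, zero_mul, neg_zero, Complex.exp_zero, mul_one, div_zero]
    rw [intervalIntegral.integral_ofReal, integral_id, neg_sq, sub_self, zero_div, ofReal_zero]
  have hn' : (n : ℂ) ≠ 0 := by exact_mod_cast hn.ne'
  have exp_right : cexp (-(n * I) * π) = (-1) ^ n := by
    rw [show -(n * I) * π = n * (-(π * I)) by ring, Complex.exp_nat_mul, Complex.exp_neg,
      Complex.exp_pi_mul_I, inv_neg_one]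
  have exp_left : cexp (-(n * I) * (-π : ℝ)) = (-1) ^ n := by
    rw [show -(n * I) * (-π : ℝ) = n * (π * I) by push_cast; ring, Complex.exp_nat_mul,
      Complex.exp_pi_mul_I]
  rw [integral_ofReal_mul_cexp (by simp [hn']), exp_right, exp_left]
  push_cast
  field_simp
  linear_combination (-(2 * n * π * I) : ℂ) * I_sq

/-- The test function `-i arg ζ` on the annulus `ρ < |ζ| < 1`. It is the one from Hardy's
inequality: its size is bounded while the Fourier coefficients in `arg ζ` are `± 1 / n`. -/
def annulusArg (ρ : ℝ) : ℂ → ℂ := {ζ | ρ < ‖ζ‖}.indicator fun ζ => -I * arg ζ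

lemma measurable_annulusArg (ρ : ℝ) : Measurable (annulusArg ρ) :=
  ((measurable_ofReal.comp measurable_arg).const_mul (-I)).indicator
    (measurableSet_lt measurable_const measurable_norm)

lemma norm_annulusArg_mul_tl_le {ν : ℝ → ℝ} (hν : IsRadialWeight ν) {ρ : ℝ} (hρ : 0 ≤ ρ)
    (hρ' : ρ < 1) {ζ : ℂ} (hζ : ‖ζ‖ < 1) : ‖annulusArg ρ ζ‖ * tl ν ‖ζ‖ ≤ π * tl ν ρ := by
  have htl : 0 < tl ν ρ := hν.tl_pos hρ hρ'
  by_cases h : ρ < ‖ζ‖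
  · have htl' : 0 < tl ν ‖ζ‖ := hν.tl_pos (norm_nonneg ζ) hζ
    rw [annulusArg, indicator_of_mem (by exact h), norm_mul, norm_neg, norm_I, one_mul, norm_real,
      Real.norm_eq_abs]
    gcongr
    · exact abs_arg_le_pi ζ
    · exact hν.tl_anti hρ h.le hζ.le
  · rw [annulusArg, indicator_of_notMem (by exact h), norm_zero, zero_mul]
    positivity

lemma conj_pow_eq_norm_mul_cexp (n : ℕ) (ζ : ℂ) :
    conj ζ ^ n = (‖ζ‖ : ℂ) ^ n * cexp (-(n * I) * arg ζ) := by
  have conj_eq : conj ζ = (‖ζ‖ : ℂ) * cexp (-(arg ζ * I)) := by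
    conv_lhs => rw [← norm_mul_exp_arg_mul_I ζ]
    rw [map_mul, conj_ofReal, ← exp_conj, map_mul, conj_ofReal, conj_I, mul_neg]
  rw [conj_eq, mul_pow, ← Complex.exp_nat_mul]
  ring_nf

lemma integral_annulusArg_mul_conj_pow (ω : ℝ → ℝ) {ρ : ℝ} (hρ : 0 ≤ ρ) (hρ' : ρ < 1) (n : ℕ) :
    ∫ ζ in unitDisc, annulusArg ρ ζ * ω ‖ζ‖ * conj ζ ^ n =
      tailMom ω ρ (n + 1) * (2 * π * (-1) ^ n / n) := by
  let g : ℝ → ℂ := (Ioo ρ 1).indicator fun s => -I * s ^ n * ω s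
  have polar (ζ : ℂ) : unitDisc.indicator (fun ζ => annulusArg ρ ζ * ω ‖ζ‖ * conj ζ ^ n) ζ =
      g ‖ζ‖ * (arg ζ * cexp (-(n * I) * arg ζ)) := by
    by_cases hζ : ‖ζ‖ < 1
    · by_cases hρζ : ρ < ‖ζ‖
      · have norm_mem : ‖ζ‖ ∈ Ioo ρ 1 := ⟨hρζ, hζ⟩
        rw [indicator_of_mem (mem_unitDisc.2 hζ), annulusArg, indicator_of_mem (by exact hρζ),
          conj_pow_eq_norm_mul_cexp]
        simp only [g, indicator_of_mem norm_mem]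
        ring
      · simp [g, indicator, annulusArg, hρζ]
    · simp [g, indicator, mem_unitDisc, hζ]
  have radial : ∫ s in Ioi (0 : ℝ), s * g s = -I * tailMom ω ρ (n + 1) := by
    have (s : ℝ) : s * g s = (Ioo ρ 1).indicator (fun s => -I * (s ^ (n + 1) * ω s : ℝ)) s := by
      by_cases hs : s ∈ Ioo ρ 1
      · simp only [g, indicator_of_mem hs]
        push_cast
        ring
      · simp only [g, indicator_of_notMem hs, mul_zero]
    simp_rw [this]
    have subset_Ioi : Ioo ρ 1 ⊆ Ioi 0 := fun s hs => hρ.trans_lt hs.1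
    rw [setIntegral_indicator measurableSet_Ioo, inter_eq_right.2 subset_Ioi,
      integral_const_mul, integral_complex_ofReal, tailMom,
      intervalIntegral.integral_of_le hρ'.le, integral_Ioc_eq_integral_Ioo]
  rw [← integral_indicator isOpen_unitDisc.measurableSet, funext polar,
    integral_norm_mul_arg g fun θ => θ * cexp (-(n * I) * θ), radial,
    integral_ofReal_mul_cexp_neg_nat]
  linear_combination (-(tailMom ω ρ (n + 1) * (2 * π * (-1) ^ n / n)) : ℂ) * I_mul_I

lemma ofReal_norm_mul_le_wSup {v : ℝ → ℝ} (hv : ContinuousOn v (Icc 0 1)) {f : ℂ → ℂ}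
    (hf : ContinuousOn f unitDisc) {z : ℂ} (hz : z ∈ unitDisc) :
    ENNReal.ofReal (‖f z‖ * v ‖z‖) ≤ wSup v f := by
  have maps : MapsTo norm unitDisc (Icc (0 : ℝ) 1) := fun w hw =>
    ⟨norm_nonneg w, (mem_unitDisc.1 hw).le⟩
  have cont : ContinuousOn (fun w => ENNReal.ofReal (‖f w‖ * v ‖w‖)) unitDisc :=
    ENNReal.continuous_ofReal.comp_continuousOn
      (hf.norm.mul (hv.comp continuous_norm.continuousOn maps))
  have ae_eq : (fun w => min (ENNReal.ofReal (‖f w‖ * v ‖w‖)) (wSup v f))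
      =ᵐ[volume.restrict unitDisc] fun w => ENNReal.ofReal (‖f w‖ * v ‖w‖) :=
    Filter.Eventually.mono ae_le_essSup fun w hw => min_eq_left hw
  exact min_eq_left_iff.1
    (Measure.eqOn_open_of_ae_eq ae_eq isOpen_unitDisc (cont.inf continuousOn_const) cont hz)

lemma ProjBddH.exists_norm_bProj_mul_le {ω v : ℝ → ℝ} (hb : ProjBddH ω v)
    (hv : ContinuousOn v (Icc 0 1)) :
    ∃ C : ℝ, 0 < C ∧ ∀ f : ℂ → ℂ, Measurable f → ∀ M : ℝ, 0 ≤ M →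
      (∀ ζ ∈ unitDisc, ‖f ζ‖ * v ‖ζ‖ ≤ M) →
      IntegrableOn (bInt ω f 0) unitDisc ∧ ∀ z ∈ unitDisc, ‖bProj ω f z‖ * v ‖z‖ ≤ C * M := by
  obtain ⟨C, hC, hproj⟩ := hb
  refine ⟨C, hC, fun f hf M hM0 hM => ?_⟩
  have wSup_le : wSup v f ≤ ENNReal.ofReal M :=
    essSup_le_of_ae_le _ ((ae_restrict_mem isOpen_unitDisc.measurableSet).mono
      fun ζ hζ => ENNReal.ofReal_le_ofReal (hM ζ hζ))
  obtain ⟨integrable, analytic, bound⟩ :=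
    hproj f hf.aestronglyMeasurable (wSup_le.trans_lt ENNReal.ofReal_lt_top)
  refine ⟨integrable 0 (Metric.mem_ball_self one_pos), fun z hz => ?_⟩
  rw [← ENNReal.ofReal_le_ofReal_iff (by positivity), ENNReal.ofReal_mul hC.le]
  calc ENNReal.ofReal (‖bProj ω f z‖ * v ‖z‖) ≤ wSup v (bProj ω f) :=
        ofReal_norm_mul_le_wSup hv analytic.continuousOn hz
    _ ≤ ENNReal.ofReal C * wSup v f := bound
    _ ≤ ENNReal.ofReal C * ENNReal.ofReal M := by gcongr

lemma mom_two_mul_add_one (ω : ℝ → ℝ) (n : ℕ) :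
    mom ω (2 * n + 1) = tailMom ω 0 (2 * n + 1) := by
  simpa using mom_natCast ω (2 * n + 1)

lemma conj_bKer (ω : ℝ → ℝ) (z ζ : ℂ) :
    conj (bKer ω z ζ) = ∑' n : ℕ, z ^ n / ((2 * tailMom ω 0 (2 * n + 1) : ℝ) : ℂ) * conj ζ ^ n := by
  rw [bKer, conj_tsum]
  refine tsum_congr fun n => ?_
  rw [map_div₀, map_pow, map_mul, conj_conj, conj_ofReal, mom_two_mul_add_one, mul_pow,
    div_mul_eq_mul_div]

lemma IsRadialWeight.integrableOn_mul_of_bInt_zero {ω : ℝ → ℝ} (h : IsRadialWeight ω) {f : ℂ → ℂ}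
    (hf : IntegrableOn (bInt ω f 0) unitDisc) :
    IntegrableOn (fun ζ => f ζ * ω ‖ζ‖) unitDisc := by
  have ne_zero : (tailMom ω 0 1 : ℂ) ≠ 0 := by exact_mod_cast (h.tailMom_zero_pos 1).ne'
  have conj_bKer_zero (ζ : ℂ) : conj (bKer ω 0 ζ) = 1 / (2 * tailMom ω 0 1) := by
    rw [conj_bKer, tsum_eq_single 0 fun n hn => by simp [hn]]
    simp
  refine (hf.const_mul (2 * tailMom ω 0 1 : ℂ)).congr (ae_of_all _ fun ζ => ?_)
  simp only [bInt, conj_bKer_zero]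
  field_simp

lemma IsRadialWeight.hasSum_bProj {ω : ℝ → ℝ} (h : IsRadialWeight ω) {f : ℂ → ℂ}
    (hf : IntegrableOn (fun ζ => f ζ * ω ‖ζ‖) unitDisc) {z : ℂ} (hz : ‖z‖ < 1) :
    HasSum (fun n : ℕ => (π : ℂ)⁻¹ * (z ^ n / ((2 * tailMom ω 0 (2 * n + 1) : ℝ) : ℂ) *
      ∫ ζ in unitDisc, f ζ * ω ‖ζ‖ * conj ζ ^ n)) (bProj ω f z) := by
  set c : ℕ → ℂ := fun n => z ^ n / ((2 * tailMom ω 0 (2 * n + 1) : ℝ) : ℂ) with c_def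
  have norm_c (n : ℕ) : ‖c n‖ = ‖z‖ ^ n / (2 * tailMom ω 0 (2 * n + 1)) := by
    rw [c_def, norm_div, norm_pow, norm_real,
      Real.norm_of_nonneg (by linarith [h.tailMom_zero_pos (2 * n + 1)])]
  have conj_pow_le (n : ℕ) : ∀ᵐ ζ ∂volume.restrict unitDisc, ‖conj ζ ^ n‖ ≤ 1 :=
    (ae_restrict_mem isOpen_unitDisc.measurableSet).mono fun ζ hζ => by
      rw [norm_pow, RCLike.norm_conj]
      exact pow_le_one₀ (norm_nonneg ζ) (mem_unitDisc.1 hζ).le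
  have integrable (n : ℕ) : IntegrableOn (fun ζ => f ζ * ω ‖ζ‖ * conj ζ ^ n) unitDisc :=
    hf.mul_bdd (Continuous.aestronglyMeasurable (by fun_prop)) (conj_pow_le n)
  have norm_le (n : ℕ) : ∫ ζ in unitDisc, ‖c n * (f ζ * ω ‖ζ‖ * conj ζ ^ n)‖ ≤
      (∫ ζ in unitDisc, ‖f ζ * ω ‖ζ‖‖) * (‖z‖ ^ n / (2 * tailMom ω 0 (2 * n + 1))) := by
    rw [← integral_mul_const]
    refine integral_mono_ae ((integrable n).const_mul _).norm (hf.norm.mul_const _)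
      ((conj_pow_le n).mono fun ζ hζ => ?_)
    simp only [norm_mul _ (_ ^ n), norm_mul (c n), norm_c]
    rw [mul_comm]
    exact mul_le_mul_of_nonneg_right (mul_le_of_le_one_right (norm_nonneg _) hζ)
      (norm_c n ▸ norm_nonneg (c n))
  have hasSum := hasSum_integral_of_summable_integral_norm
    (fun n => (integrable n).const_mul (c n))
    (Summable.of_nonneg_of_le (fun n => integral_nonneg fun _ => norm_nonneg _) norm_le
      ((h.summable_pow_div_tailMom (norm_nonneg z) hz).mul_left _))
  have tsum_eq (ζ : ℂ) : ∑' n, c n * (f ζ * ω ‖ζ‖ * conj ζ ^ n) = bInt ω f z ζ := by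
    rw [bInt, conj_bKer, mul_right_comm, ← tsum_mul_left]
    exact tsum_congr fun n => by ring
  simp only [tsum_eq, integral_const_mul] at hasSum
  exact hasSum.mul_left _

lemma IsRadialWeight.hasSum_bProj_annulusArg {ω : ℝ → ℝ} (h : IsRadialWeight ω) {ρ r : ℝ}
    (hρ : ρ ∈ Ico (0 : ℝ) 1) (hr : r ∈ Ico (0 : ℝ) 1)
    (hint : IntegrableOn (fun ζ => annulusArg ρ ζ * ω ‖ζ‖) unitDisc) :
    HasSum (fun n : ℕ => ((r ^ n * (tailMom ω ρ (n + 1) / (n * tailMom ω 0 (2 * n + 1))) : ℝ) : ℂ))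
      (bProj ω (annulusArg ρ) (-r)) := by
  have norm_lt : ‖(-r : ℂ)‖ < 1 := by
    rw [norm_neg, norm_real, Real.norm_of_nonneg hr.1]
    exact hr.2
  refine (h.hasSum_bProj hint norm_lt).congr_fun fun n => ?_
  have pi_cancel : (π : ℂ)⁻¹ * π = 1 := inv_mul_cancel₀ (ofReal_ne_zero.2 Real.pi_ne_zero)
  have sign_cancel : (-1 : ℂ) ^ n * (-1) ^ n = 1 := by rw [← mul_pow, neg_mul_neg, one_mul, one_pow]
  rw [integral_annulusArg_mul_conj_pow ω hρ.1 hρ.2, neg_pow]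
  push_cast
  trans (π : ℂ)⁻¹ * π * ((-1) ^ n * (-1) ^ n) *
    (r ^ n * (tailMom ω ρ (n + 1) / (n * tailMom ω 0 (2 * n + 1))))
  · rw [pi_cancel, sign_cancel, one_mul, one_mul]
  · ring

lemma ProjBddH.exists_sum_mul_tl_le {ω ν : ℝ → ℝ} (hb : ProjBddH ω (tl ν))
    (hω : IsRadialWeight ω) (hν : IsRadialWeight ν) :
    ∃ C : ℝ, 0 < C ∧ ∀ ρ ∈ Ico (0 : ℝ) 1, ∀ r ∈ Ico (0 : ℝ) 1, ∀ s : Finset ℕ,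
      (∑ n ∈ s, r ^ n * (tailMom ω ρ (n + 1) / (n * tailMom ω 0 (2 * n + 1)))) * tl ν r ≤
        C * tl ν ρ := by
  obtain ⟨C, hC, hproj⟩ := hb.exists_norm_bProj_mul_le hν.continuousOn_tl
  refine ⟨C * π, by positivity, fun ρ hρ r hr s => ?_⟩
  have norm_eq : ‖(-r : ℂ)‖ = r := by rw [norm_neg, norm_real, Real.norm_of_nonneg hr.1]
  obtain ⟨integrable, bound⟩ := hproj (annulusArg ρ) (measurable_annulusArg ρ) (π * tl ν ρ)
    (mul_nonneg Real.pi_pos.le (hν.tl_pos hρ.1 hρ.2).le)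
    fun ζ hζ => norm_annulusArg_mul_tl_le hν hρ.1 hρ.2 (mem_unitDisc.1 hζ)
  have hasSum := hasSum_re
    (hω.hasSum_bProj_annulusArg hρ hr (hω.integrableOn_mul_of_bInt_zero integrable))
  have sum_le : ∑ n ∈ s, r ^ n * (tailMom ω ρ (n + 1) / (n * tailMom ω 0 (2 * n + 1))) ≤
      ‖bProj ω (annulusArg ρ) (-r)‖ := by
    refine (sum_le_hasSum s (fun n _ => ?_) hasSum).trans (re_le_norm _)
    have num_nonneg : 0 ≤ tailMom ω ρ (n + 1) := hω.tailMom_nonneg _ hρ.1 hρ.2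
    have den_pos : 0 < tailMom ω 0 (2 * n + 1) := hω.tailMom_zero_pos _
    have r_nonneg : 0 ≤ r := hr.1
    rw [ofReal_re]
    positivity
  calc _ ≤ ‖bProj ω (annulusArg ρ) (-r)‖ * tl ν ‖(-r : ℂ)‖ := by
        rw [norm_eq]
        exact mul_le_mul_of_nonneg_right sum_le (hν.tl_pos hr.1 hr.2).le
    _ ≤ C * (π * tl ν ρ) := bound _ (mem_unitDisc.2 (norm_eq.trans_lt hr.2))
    _ = C * π * tl ν ρ := (mul_assoc _ _ _).symm

lemma Dhat.exists_mul_tailMom_le_tailMom {ω : ℝ → ℝ} (hD : Dhat ω) (hω : IsRadialWeight ω) :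
    ∃ c : ℝ, 0 < c ∧ ∀ {n : ℕ} {ρ : ℝ}, 1 ≤ n → 0 ≤ ρ → ρ ≤ momRadius n →
      c * tailMom ω 0 (2 * n + 1) ≤ tailMom ω ρ (n + 1) := by
  obtain ⟨S, hS, tailMom_le⟩ := hD.exists_tailMom_le_mul_tl hω
  refine ⟨Real.exp (-2) / S, by positivity, fun {n ρ} hn hρ hρn => ?_⟩
  have tl_pos : 0 < tl ω (momRadius n) := hω.tl_momRadius_pos n
  calc Real.exp (-2) / S * tailMom ω 0 (2 * n + 1) ≤ Real.exp (-2) / S * tailMom ω 0 n := by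
        gcongr
        exact hω.tailMom_anti_right (by lia) le_rfl zero_le_one
    _ ≤ Real.exp (-2) / S * (S * tl ω (momRadius n)) := by
        gcongr
        exact tailMom_le n
    _ = Real.exp (-2) * tl ω (momRadius n) := by field_simp
    _ ≤ momRadius n ^ (n + 1) * tl ω (momRadius n) := by
        gcongr
        exact exp_neg_two_le_momRadius_pow hn
    _ ≤ tailMom ω ρ (n + 1) :=
        hω.pow_mul_tl_le_tailMom (n + 1) hρ hρn (momRadius_lt_one n).le

lemma log_div_le_sum_Ico_one_div {N M : ℕ} (hN : 1 ≤ N) (hNM : N ≤ M) :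
    Real.log (M / N) ≤ ∑ n ∈ Finset.Ico N M, (1 / n : ℝ) := by
  have hN' : (0 : ℝ) < N := by exact_mod_cast hN
  induction M, hNM using Nat.le_induction with
  | base => simp [hN'.ne']
  | succ M hNM ih =>
    have hM : (0 : ℝ) < M := hN'.trans_le (by exact_mod_cast hNM)
    have log_succ_div_le : Real.log ((M + 1 : ℕ) / M) ≤ 1 / M := by
      refine (Real.log_le_sub_one_of_pos (by positivity)).trans_eq ?_
      push_cast
      field_simp
      ring
    calc Real.log ((M + 1 : ℕ) / N) = Real.log (M / N) + Real.log ((M + 1 : ℕ) / M) := by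
          rw [← Real.log_mul (by positivity) (by positivity)]
          congr 1
          field_simp
      _ ≤ (∑ n ∈ Finset.Ico N M, (1 / n : ℝ)) + 1 / M := add_le_add ih log_succ_div_le
      _ = ∑ n ∈ Finset.Ico N (M + 1), (1 / n : ℝ) := (Finset.sum_Ico_succ_top hNM _).symm

lemma ProjBddH.exists_log_mul_tl_le {ω ν : ℝ → ℝ} (hb : ProjBddH ω (tl ν))
    (hω : IsRadialWeight ω) (hν : IsRadialWeight ν) (hD : Dhat ω) :
    ∃ B : ℝ, 0 < B ∧ ∀ N M : ℕ, 1 ≤ N → N ≤ M →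
      Real.log (M / N) * tl ν (momRadius M) ≤ B * tl ν (momRadius N) := by
  obtain ⟨C, hC, sum_le⟩ := hb.exists_sum_mul_tl_le hω hν
  obtain ⟨c, hc, mul_tailMom_le⟩ := hD.exists_mul_tailMom_le_tailMom hω
  refine ⟨C / (Real.exp (-2) * c), by positivity, fun N M hN hNM => ?_⟩
  have term_ge : ∀ n ∈ Finset.Ico N M, Real.exp (-2) * c * (1 / n) ≤ momRadius M ^ n *
      (tailMom ω (momRadius N) (n + 1) / (n * tailMom ω 0 (2 * n + 1))) := by
    intro n hn
    obtain ⟨hNn, hnM⟩ := Finset.mem_Ico.1 hn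
    have mom_pos : 0 < tailMom ω 0 (2 * n + 1) := hω.tailMom_zero_pos _
    have exp_le : Real.exp (-2) ≤ momRadius M ^ n :=
      (exp_neg_two_le_momRadius_pow (hN.trans hNM)).trans
        (pow_le_pow_of_le_one (momRadius_nonneg M) (momRadius_lt_one M).le (by lia))
    have le_ratio : c * (1 / n) ≤
        tailMom ω (momRadius N) (n + 1) / (n * tailMom ω 0 (2 * n + 1)) :=
      calc c * (1 / n) = c * tailMom ω 0 (2 * n + 1) / (n * tailMom ω 0 (2 * n + 1)) := by
            field_simp
        _ ≤ _ := by
            gcongr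
            exact mul_tailMom_le (hN.trans hNn) (momRadius_nonneg N) (monotone_momRadius hNn)
    rw [mul_assoc]
    exact mul_le_mul exp_le le_ratio (by positivity) (pow_nonneg (momRadius_nonneg M) n)
  rw [div_mul_eq_mul_div, le_div_iff₀ (by positivity)]
  calc Real.log (M / N) * tl ν (momRadius M) * (Real.exp (-2) * c)
      = Real.exp (-2) * c * Real.log (M / N) * tl ν (momRadius M) := by ring
    _ ≤ (∑ n ∈ Finset.Ico N M, momRadius M ^ n *
          (tailMom ω (momRadius N) (n + 1) / (n * tailMom ω 0 (2 * n + 1)))) *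
            tl ν (momRadius M) := by
        refine mul_le_mul_of_nonneg_right ?_ (hν.tl_momRadius_pos M).le
        refine le_trans ?_ (Finset.sum_le_sum term_ge)
        rw [← Finset.mul_sum]
        gcongr
        exact log_div_le_sum_Ico_one_div hN hNM
    _ ≤ C * tl ν (momRadius N) :=
        sum_le _ (momRadius_mem_Ico N) _ (momRadius_mem_Ico M) _

lemma exists_momRadius_near {x : ℝ} (hx : x ∈ Ico (0 : ℝ) 1) :
    ∃ N : ℕ, 1 ≤ N ∧ x ≤ momRadius N ∧ 1 - x ≤ 3 * (1 - momRadius N) := by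
  have u_pos : 0 < 1 - x := sub_pos.2 hx.2
  have one_le : 1 ≤ 1 / (1 - x) := (one_le_div u_pos).2 (by linarith [hx.1])
  have le_ceil : 1 / (1 - x) ≤ ⌈1 / (1 - x)⌉₊ := Nat.le_ceil _
  have ceil_lt : ⌈1 / (1 - x)⌉₊ < 1 / (1 - x) + 1 := Nat.ceil_lt_add_one (by positivity)
  refine ⟨⌈1 / (1 - x)⌉₊, Nat.one_le_cast.1 (one_le.trans le_ceil), ?_, ?_⟩
  · have : 1 - momRadius ⌈1 / (1 - x)⌉₊ ≤ 1 - x := by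
      rw [one_sub_momRadius]
      exact (one_div_le (by positivity) u_pos).2 (by linarith)
    linarith
  · rw [one_sub_momRadius, mul_one_div, le_div_iff₀ (by positivity)]
    calc (1 - x) * (⌈1 / (1 - x)⌉₊ + 1) ≤ (1 - x) * (3 * (1 / (1 - x))) := by
          gcongr
          linarith
      _ = 3 := by field_simp

lemma one_sub_momRadius_le_mul {Q : ℕ} (hQ : 1 ≤ Q) (N : ℕ) :
    1 - momRadius N ≤ Q * (1 - momRadius (Q * N)) := by
  have hQ' : (1 : ℝ) ≤ Q := by exact_mod_cast hQ
  rw [one_sub_momRadius, one_sub_momRadius, mul_one_div,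
    div_le_div_iff₀ (by positivity) (by positivity)]
  push_cast
  linarith

lemma IsRadialWeight.dcheck_of_log_mul_tl_le {ν : ℝ → ℝ} (hν : IsRadialWeight ν) {B : ℝ}
    (hB : 0 < B) (log_mul_le : ∀ N M : ℕ, 1 ≤ N → N ≤ M →
      Real.log (M / N) * tl ν (momRadius M) ≤ B * tl ν (momRadius N)) :
    Dcheck ν := by
  obtain ⟨Q, hQ, log_ge⟩ : ∃ Q : ℕ, 1 ≤ Q ∧ 2 * B ≤ Real.log Q :=
    (((Real.tendsto_log_atTop.comp tendsto_natCast_atTop_atTop).eventually_ge_atTop _).and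
      (Filter.eventually_ge_atTop 1)).exists.imp fun _ h => h.symm
  have hQ' : (1 : ℝ) ≤ Q := by exact_mod_cast hQ
  refine ⟨3 * Q, 2, by linarith, one_lt_two, fun x hx => ?_⟩
  obtain ⟨N, hN, hxN, hNx⟩ := exists_momRadius_near hx
  have hN' : (N : ℝ) ≠ 0 := Nat.cast_ne_zero.2 (Nat.one_le_iff_ne_zero.1 hN)
  have target_le_one : 1 - (1 - x) / (3 * Q) ≤ 1 :=
    sub_le_self 1 (div_nonneg (sub_nonneg.2 hx.2.le) (by positivity))
  have le_target : momRadius (Q * N) ≤ 1 - (1 - x) / (3 * Q) := by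
    rw [le_sub_comm, div_le_iff₀ (by positivity)]
    linarith [one_sub_momRadius_le_mul hQ N]
  have doubled : B * (2 * tl ν (momRadius (Q * N))) ≤ B * tl ν (momRadius N) :=
    calc B * (2 * tl ν (momRadius (Q * N))) = 2 * B * tl ν (momRadius (Q * N)) := by ring
      _ ≤ Real.log Q * tl ν (momRadius (Q * N)) :=
          mul_le_mul_of_nonneg_right log_ge (hν.tl_momRadius_pos _).le
      _ = Real.log ((Q * N : ℕ) / N) * tl ν (momRadius (Q * N)) := by
          rw [Nat.cast_mul, mul_div_cancel_right₀ _ hN']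
      _ ≤ B * tl ν (momRadius N) := log_mul_le _ _ hN (Nat.le_mul_of_pos_left N hQ)
  calc 2 * tl ν (1 - (1 - x) / (3 * Q)) ≤ 2 * tl ν (momRadius (Q * N)) := by
        gcongr
        exact hν.tl_anti (momRadius_nonneg _) le_target target_le_one
    _ ≤ tl ν (momRadius N) := le_of_mul_le_mul_left doubled hB
    _ ≤ tl ν x := hν.tl_anti hx.1 hxN (momRadius_lt_one N).le

/-- Proposition 4.2: if `ω ∈ D̂` and `P_ω : L^∞_ν̂ → H^∞_ν̂` is bounded,
then `ν ∈ Ď`. -/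
theorem stmt16 (ω ν : ℝ → ℝ) (hω : IsRadialWeight ω) (hν : IsRadialWeight ν)
    (hωD : Dhat ω) (hb : ProjBddH ω (tl ν)) :
    Dcheck ν := by
  obtain ⟨B, hB, log_mul_le⟩ := hb.exists_log_mul_tl_le hω hν hωD
  exact hν.dcheck_of_log_mul_tl_le hB log_mul_le
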